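/- Let R be a commutative semiring, M and N modules over R, and suppose the linear maps cup : R →ₗ[R] M ⊗[R] N and cap : N ⊗[R] M →ₗ[R] R satisfy the two zig-zag identities. Then M is a projective R-module (Module.Projective R M). -/

import Mathlib

open TensorProduct

/-! Currying `cap` to a map from `N` to the dual of `M` turns `cup 1 : M ⊗[R] N` into an element
of `Module.Dual R M ⊗[R] M`. The first zig-zag identity says that the endomorphism of `M` which
this tensor represents is the identity, so `cup 1` supplies a finite dual basis of `M`. -/

section Zigzag

variable {R : Type*} [CommSemiring R] {M N P : Type*}
  [AddCommMonoid M] [Module R M] [AddCommMonoid N] [Module R N] [AddCommMonoid P] [Module R P]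

theorem dualTensorHom_comm_lTensor_curry_apply (f : N ⊗[R] P →ₗ[R] R) (t : M ⊗[R] N) (p : P) :
    dualTensorHom R P M (TensorProduct.comm R M (Module.Dual R P)
      ((TensorProduct.curry f).lTensor M t)) p =
      TensorProduct.rid R M (f.lTensor M (TensorProduct.assoc R M N P (t ⊗ₜ[R] p))) := by
  induction t with
  | zero => simp
  | tmul m n => simp
  | add t₁ t₂ h₁ h₂ => simp only [map_add, LinearMap.add_apply, TensorProduct.add_tmul, h₁, h₂]

theorem one_mem_range_dualTensorHom_of_zigzag (cup : R →ₗ[R] M ⊗[R] N) (cap : N ⊗[R] M →ₗ[R] R)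
    (zig : ∀ m : M,
      TensorProduct.rid R M
        (cap.lTensor M
          (TensorProduct.assoc R M N M
            (cup.rTensor M ((TensorProduct.lid R M).symm m)))) = m) :
    1 ∈ (dualTensorHom R M M).range := by
  refine ⟨TensorProduct.comm R M (Module.Dual R M) ((TensorProduct.curry cap).lTensor M (cup 1)),
    LinearMap.ext fun m ↦ ?_⟩
  rw [dualTensorHom_comm_lTensor_curry_apply]
  simpa only [TensorProduct.lid_symm_apply, LinearMap.rTensor_tmul, Module.End.one_apply]
    using zig m

theorem projective_of_zigzag_general (cup : R →ₗ[R] M ⊗[R] N) (cap : N ⊗[R] M →ₗ[R] R)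
    (zig : ∀ m : M,
      TensorProduct.rid R M
        (cap.lTensor M
          (TensorProduct.assoc R M N M
            (cup.rTensor M ((TensorProduct.lid R M).symm m)))) = m) :
    Module.Finite R M ∧ Module.Projective R M :=
  have id_mem_range := one_mem_range_dualTensorHom_of_zigzag cup cap zig
  ⟨.of_one_mem_range_dualTensorHom id_mem_range, .of_one_mem_range_dualTensorHom id_mem_range⟩

end Zigzag

/-- If `cup` and `cap` satisfy the two zig-zag identities, then `M` is a projective
`R`-module. -/
theorem projective_of_zigzag {R : Type*} [CommSemiring R] {M N : Type*}
    [AddCommMonoid M] [Module R M] [AddCommMonoid N] [Module R N]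
    (cup : R →ₗ[R] M ⊗[R] N) (cap : N ⊗[R] M →ₗ[R] R)
    (zig : ∀ m : M,
      (TensorProduct.rid R M)
        ((LinearMap.lTensor M cap)
          ((TensorProduct.assoc R M N M)
            ((LinearMap.rTensor M cup) ((TensorProduct.lid R M).symm m)))) = m)
    (zag : ∀ n : N,
      (TensorProduct.lid R N)
        ((LinearMap.rTensor N cap)
          ((TensorProduct.assoc R N M N).symm
            ((LinearMap.lTensor N cup) ((TensorProduct.rid R N).symm n)))) = n) :
    Module.Projective R M :=
  (projective_of_zigzag_general cup cap zig).2
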